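/- There exists a constant c > 0 such that for all t ≥ 2, the (two-colour) on-line Ramsey number of the complete bipartite graph K_{t,t} satisfies r̃(K_{t,t}) ≤ c · 2^t · t^{5/2} · (log t)^{1/2}, where log denotes the logarithm to the base 2. -/

import Mathlib

/-- A monochromatic clique of size `k` in colour `i` for an edge-colouring `c` of `K_n`. -/
def monoClique {n q : ℕ} (c : Sym2 (Fin n) → Fin q) (i : Fin q) (k : ℕ) : Prop :=
  ∃ A : Finset (Fin n), A.card = k ∧ ∀ u ∈ A, ∀ v ∈ A, u ≠ v → c s(u, v) = i

/-- The `q`-colour Ramsey number `r(k 0, …, k (q-1))`. -/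
noncomputable def ramseyQ {q : ℕ} (k : Fin q → ℕ) : ℕ :=
  sInf {n : ℕ | ∀ c : Sym2 (Fin n) → Fin q, ∃ i : Fin q, monoClique c i (k i)}

/-- The two-colour Ramsey number `r(s, t)`. -/
noncomputable def ramsey2 (s t : ℕ) : ℕ := ramseyQ ![s, t]

/-- A history in the on-line Ramsey game: the previously presented edges with their colours. -/
abbrev History (q : ℕ) := List (Sym2 ℕ × Fin q)

/-- A Builder strategy is valid if it always presents a genuine new edge. -/
def validBuilder {q : ℕ} (B : History q → Sym2 ℕ) : Prop :=
  ∀ h : History q, ¬ (B h).IsDiag ∧ B h ∉ h.map Prod.fst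

/-- The play determined by a Builder strategy `B` and a Painter strategy `P`:
`play B P n` is the history after `n` rounds. -/
def play {q : ℕ} (B : History q → Sym2 ℕ) (P : History q → Sym2 ℕ → Fin q) : ℕ → History q
  | 0 => []
  | n + 1 =>
      let h := play B P n
      h ++ [(B h, P h (B h))]

/-- The graph formed by the edges of colour `i` in a history. -/
def colourGraph {q : ℕ} (h : History q) (i : Fin q) : SimpleGraph ℕ :=
  SimpleGraph.fromEdgeSet {e | (e, i) ∈ h}

/-- `H` contains a copy of `G` as a subgraph. -/
def containsCopy {V : Type*} (G : SimpleGraph V) (H : SimpleGraph ℕ) : Prop :=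
  ∃ f : V → ℕ, Function.Injective f ∧ ∀ u v, G.Adj u v → H.Adj (f u) (f v)

/-- The `q`-colour on-line Ramsey number of `G`: the least `N` such that Builder has a
valid strategy forcing, against every Painter strategy, a monochromatic copy of `G`
within at most `N` rounds. -/
noncomputable def onlineRamsey {V : Type*} (q : ℕ) (G : SimpleGraph V) : ℕ :=
  sInf {N : ℕ | ∃ B : History q → Sym2 ℕ, validBuilder B ∧
    ∀ P : History q → Sym2 ℕ → Fin q,
      ∃ n ≤ N, ∃ i : Fin q, containsCopy G (colourGraph (play B P n) i)}

open Finset in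
/-- Double counting: a dense bipartite relation contains `k` left vertices with `t` common
right neighbours. -/
lemma kst_aux (A W : Finset ℕ) (rel : ℕ → ℕ → Prop) (d k t : ℕ) (hk : k ≤ A.card)
    (hA : 0 < A.card)
    (hd : ∀ v ∈ W, ∃ D ⊆ A, d ≤ D.card ∧ ∀ u ∈ D, rel u v)
    (hW : t * A.card ^ k ≤ W.card * (d - k) ^ k) :
    ∃ S ⊆ A, S.card = k ∧ ∃ T ⊆ W, T.card = t ∧ ∀ u ∈ S, ∀ v ∈ T, rel u v := by
  classical
  have hpow : (d - k) ^ k * A.card.choose k ≤ A.card ^ k * d.choose k := by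
    have h1 : (d - k) ^ k ≤ d.descFactorial k :=
      le_trans (Nat.pow_le_pow_left (by omega) k) (Nat.pow_sub_le_descFactorial d k)
    have h2 : A.card.descFactorial k ≤ A.card ^ k := Nat.descFactorial_le_pow _ _
    rw [Nat.descFactorial_eq_factorial_mul_choose] at h1 h2
    have h3 := Nat.mul_le_mul h1 h2
    have hf := Nat.factorial_pos k
    refine le_of_mul_le_mul_left ?_ hf
    calc _ = (d - k) ^ k * (k.factorial * A.card.choose k) := by ring
      _ ≤ _ := h3
      _ = _ := by ring
  have hmain : t * A.card.choose k ≤ W.card * d.choose k := by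
    have hp : 0 < A.card ^ k := by positivity
    refine le_of_mul_le_mul_left ?_ hp
    calc A.card ^ k * (t * A.card.choose k) = (t * A.card ^ k) * A.card.choose k := by ring
      _ ≤ (W.card * (d - k) ^ k) * A.card.choose k := Nat.mul_le_mul_right _ hW
      _ = W.card * ((d - k) ^ k * A.card.choose k) := by ring
      _ ≤ W.card * (A.card ^ k * d.choose k) := Nat.mul_le_mul_left _ hpow
      _ = _ := by ring
  have hcount : ∀ v ∈ W, d.choose k ≤
      ((A.powersetCard k).filter (fun S => ∀ u ∈ S, rel u v)).card := by
    intro v hv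
    obtain ⟨D, hDA, hdD, hD⟩ := hd v hv
    calc d.choose k ≤ D.card.choose k := Nat.choose_le_choose k hdD
      _ = (D.powersetCard k).card := (card_powersetCard k D).symm
      _ ≤ _ := by
        apply card_le_card
        intro S hS
        rw [mem_powersetCard] at hS
        rw [mem_filter, mem_powersetCard]
        exact ⟨⟨hS.1.trans hDA, hS.2⟩, fun u hu => hD u (hS.1 hu)⟩
  have hsum : ∑ S ∈ A.powersetCard k, t ≤
      ∑ S ∈ A.powersetCard k, (W.filter (fun v => ∀ u ∈ S, rel u v)).card := by
    rw [sum_const, card_powersetCard, smul_eq_mul, mul_comm]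
    refine hmain.trans ?_
    calc W.card * d.choose k = ∑ v ∈ W, d.choose k := by simp
      _ ≤ ∑ v ∈ W, ((A.powersetCard k).filter (fun S => ∀ u ∈ S, rel u v)).card :=
        sum_le_sum hcount
      _ = _ := by
        simp only [card_filter]
        exact sum_comm
  have hne : (A.powersetCard k).Nonempty := powersetCard_nonempty.2 hk
  obtain ⟨S, hS, hSt⟩ := exists_le_of_sum_le hne hsum
  rw [mem_powersetCard] at hS
  obtain ⟨T, hT, hTc⟩ := exists_subset_card_eq hSt
  refine ⟨S, hS.1, hS.2, T, hT.trans (filter_subset _ _), hTc, ?_⟩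
  intro u hu v hv
  exact (mem_filter.1 (hT hv)).2 u hu

lemma containsCopy_of {q : ℕ} (h : History q) (i : Fin q) (t : ℕ) (S T : Finset ℕ)
    (hS : S.card = t) (hT : T.card = t) (hST : Disjoint S T)
    (hc : ∀ u ∈ S, ∀ v ∈ T, (s(u, v), i) ∈ h) :
    containsCopy (completeBipartiteGraph (Fin t) (Fin t)) (colourGraph h i) := by
  have key : ∀ u ∈ S, ∀ v ∈ T, (colourGraph h i).Adj u v := by
    intro u hu v hv
    rw [colourGraph, SimpleGraph.fromEdgeSet_adj]
    exact ⟨hc u hu v hv, fun e => Finset.disjoint_left.1 hST hu (e ▸ hv)⟩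
  refine ⟨Sum.elim (fun x => S.orderEmbOfFin hS x) (fun x => T.orderEmbOfFin hT x), ?_, ?_⟩
  · refine Function.Injective.sumElim (S.orderEmbOfFin hS).injective
      (T.orderEmbOfFin hT).injective ?_
    intro x y e
    exact Finset.disjoint_left.1 hST (S.orderEmbOfFin_mem hS x)
      (e ▸ T.orderEmbOfFin_mem hT y)
  · rintro (u | u) (v | v) huv
    · simp at huv
    · exact key _ (S.orderEmbOfFin_mem hS u) _ (T.orderEmbOfFin_mem hT v)
    · exact (key _ (S.orderEmbOfFin_mem hS v) _ (T.orderEmbOfFin_mem hT u)).symm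
    · simp at huv

lemma exists_fresh {q : ℕ} (h : History q) : ∃ e : Sym2 ℕ, ¬ e.IsDiag ∧ e ∉ h.map Prod.fst := by
  classical
  have hinf : (Set.range (fun n : ℕ => s(n, n + 1))).Infinite := by
    apply Set.infinite_range_of_injective
    intro a b hab
    simp only [Sym2.eq_iff] at hab
    omega
  obtain ⟨e, ⟨n, rfl⟩, he⟩ := hinf.exists_notMem_finset (h.map Prod.fst).toFinset
  refine ⟨_, ?_, by simpa using he⟩
  simp

open Classical in
/-- Builder presents, as long as possible, new edges from the target set `T h`. -/
noncomputable def greedyB {q : ℕ} (T : History q → Finset (Sym2 ℕ)) (h : History q) : Sym2 ℕ :=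
  if H : ∃ e : Sym2 ℕ, e ∈ T h ∧ ¬ e.IsDiag ∧ e ∉ h.map Prod.fst then H.choose
  else (exists_fresh h).choose

lemma greedyB_valid {q : ℕ} (T : History q → Finset (Sym2 ℕ)) : validBuilder (greedyB T) := by
  intro h
  unfold greedyB
  split_ifs with H
  · exact H.choose_spec.2
  · exact (exists_fresh h).choose_spec

lemma play_length {q : ℕ} (B : History q → Sym2 ℕ) (P : History q → Sym2 ℕ → Fin q) (n : ℕ) :
    (play B P n).length = n := by
  induction n with
  | zero => rfl
  | succ n ih => simp [play, ih]

lemma play_extends {q : ℕ} (B : History q → Sym2 ℕ) (P : History q → Sym2 ℕ → Fin q) (n m : ℕ) :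
    play B P n <+: play B P (n + m) := by
  induction m with
  | zero => exact List.prefix_rfl
  | succ m ih => exact ih.trans (List.prefix_append _ _)

lemma greedy_covers {q : ℕ} (T : History q → Finset (Sym2 ℕ)) (P : History q → Sym2 ℕ → Fin q)
    (n0 N : ℕ) (E : Finset (Sym2 ℕ)) (hE : E.card ≤ N)
    (hT : ∀ m < N, T (play (greedyB T) P (n0 + m)) = E) (e : Sym2 ℕ) (he : e ∈ E)
    (hd : ¬ e.IsDiag) : ∃ i, (e, i) ∈ play (greedyB T) P (n0 + N) := by
  classical
  have key : ∀ m ≤ N, (E.filter (fun e => ¬ e.IsDiag ∧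
      e ∉ (play (greedyB T) P (n0 + m)).map Prod.fst)).card ≤ N - m := by
    intro m
    induction m with
    | zero => intro _; exact (Finset.card_filter_le _ _).trans hE
    | succ m ih =>
      intro hm
      have ih := ih (by omega)
      set h := play (greedyB T) P (n0 + m) with hh
      have hnext : play (greedyB T) P (n0 + (m + 1)) =
          h ++ [(greedyB T h, P h (greedyB T h))] := rfl
      have hTh : T h = E := hT m (by omega)
      rw [hnext]
      by_cases H : ∃ e : Sym2 ℕ, e ∈ T h ∧ ¬ e.IsDiag ∧ e ∉ h.map Prod.fst
      · have hB : greedyB T h = H.choose := by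
          unfold greedyB; rw [dif_pos H]
        have hsp := H.choose_spec
        rw [← hB, hTh] at hsp
        have hlt : (E.filter (fun e => ¬ e.IsDiag ∧
            e ∉ (h ++ [(greedyB T h, P h (greedyB T h))]).map Prod.fst)).card <
            (E.filter (fun e => ¬ e.IsDiag ∧ e ∉ h.map Prod.fst)).card := by
          apply Finset.card_lt_card
          rw [Finset.ssubset_iff_of_subset]
          · refine ⟨greedyB T h, Finset.mem_filter.2 hsp, ?_⟩
            simp
          · intro e he
            simp only [Finset.mem_filter, List.map_append, List.mem_append, not_or] at he ⊢
            exact ⟨he.1, he.2.1, he.2.2.1⟩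
        omega
      · have : (E.filter (fun e => ¬ e.IsDiag ∧
            e ∉ (h ++ [(greedyB T h, P h (greedyB T h))]).map Prod.fst)) = ∅ := by
          apply Finset.filter_eq_empty_iff.2
          intro e he hh
          apply H
          simp only [List.map_append, List.mem_append, not_or] at hh
          exact ⟨e, hTh ▸ he, hh.1, hh.2.1⟩
        rw [this]; simp
  have h0 := key N le_rfl
  rw [Nat.sub_self, Nat.le_zero, Finset.card_eq_zero, Finset.filter_eq_empty_iff] at h0
  have := h0 he
  simp only [not_and, not_not] at this
  have := this hd
  obtain ⟨⟨e', i⟩, hm, rfl⟩ := List.mem_map.1 this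
  exact ⟨i, hm⟩

/-- Two-phase strategies. -/
lemma two_phase {q : ℕ} (E1 : Finset (Sym2 ℕ)) (E2 : History q → Finset (Sym2 ℕ)) (n1 n2 : ℕ)
    (h1 : E1.card ≤ n1) (h2 : ∀ h, (E2 h).card ≤ n2) :
    ∃ B : History q → Sym2 ℕ, validBuilder B ∧ ∀ P : History q → Sym2 ℕ → Fin q,
      (∀ e ∈ E1, ¬ e.IsDiag → ∃ i, (e, i) ∈ play B P n1) ∧
      (∀ e ∈ E2 (play B P n1), ¬ e.IsDiag → ∃ i, (e, i) ∈ play B P (n1 + n2)) := by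
  classical
  set T : History q → Finset (Sym2 ℕ) := fun h =>
    if h.length < n1 then E1 else E2 (h.take n1) with hT
  refine ⟨greedyB T, greedyB_valid T, fun P => ⟨?_, ?_⟩⟩
  · intro e he hd
    have := greedy_covers T P 0 n1 E1 h1 (by
      intro m hm
      simp only [hT, play_length]
      rw [if_pos (by omega)]) e he hd
    simpa using this
  · intro e he hd
    refine greedy_covers T P n1 n2 (E2 (play (greedyB T) P n1)) (h2 _) ?_ e he hd
    intro m hm
    have hp := play_extends (greedyB T) P n1 m
    have htk := List.prefix_iff_eq_take.1 hp
    rw [play_length] at htk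
    show (if (play (greedyB T) P (n1 + m)).length < n1 then E1 else _) = _
    rw [play_length, if_neg (by omega), ← htk]

lemma fin_two_aux : ∀ i c : Fin 2, i ≠ c → i = 1 - c := by decide

open Finset in
/-- Phase one: pigeonhole on colour patterns. -/
lemma phase_one (h : History 2) (r M : ℕ) (U V : Finset ℕ) (hU : U.card = 2 * r)
    (hV : V.card = 4 ^ r * M) (hcov : ∀ u ∈ U, ∀ v ∈ V, ∃ i, (s(u, v), i) ∈ h) :
    ∃ W ⊆ V, W.card = M ∧ ∃ R ⊆ U, R.card = r ∧ ∃ c : Fin 2,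
      ∀ u ∈ R, ∀ v ∈ W, (s(u, v), c) ∈ h := by
  classical
  set pat : ℕ → Finset ℕ := fun v => U.filter (fun u => (s(u, v), (0 : Fin 2)) ∈ h) with hpat
  have hmaps : ∀ v ∈ V, pat v ∈ U.powerset := fun v _ => mem_powerset.2 (filter_subset _ _)
  have hcard : U.powerset.card * M ≤ V.card := by
    rw [card_powerset, hU, hV, pow_mul]; norm_num
  obtain ⟨p, hp, hpM⟩ := exists_le_card_fiber_of_mul_le_card_of_maps_to hmaps
    ⟨∅, empty_mem_powerset _⟩ hcard
  rw [mem_powerset] at hp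
  obtain ⟨W, hW, hWM⟩ := exists_subset_card_eq hpM
  refine ⟨W, hW.trans (filter_subset _ _), hWM, ?_⟩
  have hsum : p.card + (U \ p).card = 2 * r := by
    rw [← hU, card_sdiff_of_subset hp]
    have := card_le_card hp
    omega
  by_cases hpr : r ≤ p.card
  · obtain ⟨R, hR, hRr⟩ := exists_subset_card_eq hpr
    refine ⟨R, hR.trans hp, hRr, 0, ?_⟩
    intro u hu v hv
    have h1 := (mem_filter.1 (hW hv)).2
    have h2 : u ∈ pat v := h1 ▸ hR hu
    exact (mem_filter.1 h2).2
  · obtain ⟨R, hR, hRr⟩ := exists_subset_card_eq (s := U \ p) (n := r) (by omega)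
    refine ⟨R, hR.trans sdiff_subset, hRr, 1, ?_⟩
    intro u hu v hv
    have h1 := (mem_filter.1 (hW hv)).2
    have hup := mem_sdiff.1 (hR hu)
    obtain ⟨i, hi⟩ := hcov u hup.1 v (mem_filter.1 (hW hv)).1
    have h2 : u ∉ pat v := fun hh => hup.2 (h1 ▸ hh)
    have hi0 : i ≠ 0 := by
      rintro rfl
      exact h2 (mem_filter.2 ⟨hup.1, hi⟩)
    have : i = 1 := by omega
    exact this ▸ hi

open Finset in
/-- Phase two. -/
lemma phase_two (h : History 2) (t r M dR dB : ℕ) (A W R : Finset ℕ) (c : Fin 2)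
    (ht : 0 < t) (hrt : r ≤ t) (hta : t ≤ A.card) (hd : dR + dB ≤ A.card)
    (hW : W.card = M) (hR : R.card = r) (hRA : Disjoint R A) (hRW : Disjoint R W)
    (hAW : Disjoint A W)
    (hRc : ∀ u ∈ R, ∀ v ∈ W, (s(u, v), c) ∈ h)
    (hcov : ∀ u ∈ A, ∀ v ∈ W, ∃ i, (s(u, v), i) ∈ h)
    (hMR : 2 * t * A.card ^ (t - r) ≤ M * (dR - t) ^ (t - r))
    (hMB : 2 * t * A.card ^ t ≤ M * (dB - t) ^ t) :
    ∃ i, containsCopy (completeBipartiteGraph (Fin t) (Fin t)) (colourGraph h i) := by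
  classical
  set N : ℕ → Finset ℕ := fun v => A.filter (fun u => (s(u, v), c) ∈ h) with hN
  have hsplit : (W.filter (fun v => dR ≤ (N v).card)).card +
      (W.filter (fun v => ¬ dR ≤ (N v).card)).card = M := by
    rw [card_filter_add_card_filter_not, hW]
  by_cases hcase : M ≤ 2 * (W.filter (fun v => dR ≤ (N v).card)).card
  · obtain ⟨S, hSA, hSk, T, hTW, hTt, hST⟩ := kst_aux A (W.filter (fun v => dR ≤ (N v).card))
      (fun u v => (s(u, v), c) ∈ h) dR (t - r) t (by omega) (by omega)
      (fun v hv => ⟨N v, filter_subset _ _, (mem_filter.1 hv).2, fun u hu => (mem_filter.1 hu).2⟩)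
      (by
        have h1 : (dR - t) ^ (t - r) ≤ (dR - (t - r)) ^ (t - r) :=
          Nat.pow_le_pow_left (by omega) _
        have h2 := Nat.mul_le_mul hcase h1
        nlinarith)
    have hTW' : T ⊆ W := hTW.trans (filter_subset _ _)
    have hdRS : Disjoint R S := hRA.mono_right hSA
    refine ⟨c, containsCopy_of h c t (R ∪ S) T ?_ hTt ?_ ?_⟩
    · rw [card_union_of_disjoint hdRS]; omega
    · rw [disjoint_union_left]
      exact ⟨hRW.mono_right hTW', hAW.mono hSA hTW'⟩
    · intro u hu v hv
      rcases mem_union.1 hu with hu | hu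
      · exact hRc u hu v (hTW' hv)
      · exact hST u hu v hv
  · obtain ⟨S, hSA, hSk, T, hTW, hTt, hST⟩ := kst_aux A (W.filter (fun v => ¬ dR ≤ (N v).card))
      (fun u v => (s(u, v), 1 - c) ∈ h) dB t t hta (by omega)
      (fun v hv => ⟨A \ N v, sdiff_subset, by
          have h1 := (mem_filter.1 hv).2
          have h2 : (A \ N v).card = A.card - (N v).card :=
            card_sdiff_of_subset (filter_subset _ _)
          omega, fun u hu => by
          have hu := mem_sdiff.1 hu
          obtain ⟨i, hi⟩ := hcov u hu.1 v (mem_filter.1 hv).1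
          have hic : i ≠ c := by
            rintro rfl
            exact hu.2 (mem_filter.2 ⟨hu.1, hi⟩)
          have : i = 1 - c := fin_two_aux i c hic
          exact this ▸ hi⟩)
      (by
        have hc2 : M ≤ 2 * (W.filter (fun v => ¬ dR ≤ (N v).card)).card := by omega
        have h2 := Nat.mul_le_mul_right ((dB - t) ^ t) hc2
        nlinarith)
    have hTW' : T ⊆ W := hTW.trans (filter_subset _ _)
    exact ⟨1 - c, containsCopy_of h _ t S T hSk hTt (hAW.mono hSA hTW') hST⟩

/-- All edges between two vertex sets. -/
def crossEdges (A B : Finset ℕ) : Finset (Sym2 ℕ) := (A ×ˢ B).image (fun p => s(p.1, p.2))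

lemma crossEdges_card (A B : Finset ℕ) : (crossEdges A B).card ≤ A.card * B.card := by
  rw [← Finset.card_product]; exact Finset.card_image_le

lemma mem_crossEdges {A B : Finset ℕ} {u v : ℕ} (hu : u ∈ A) (hv : v ∈ B) :
    s(u, v) ∈ crossEdges A B :=
  Finset.mem_image.2 ⟨(u, v), Finset.mem_product.2 ⟨hu, hv⟩, rfl⟩

lemma online_le (t r M a dR dB : ℕ) (ht : 0 < t) (hrt : r ≤ t) (hta : t ≤ a)
    (hd : dR + dB ≤ a)
    (hMR : 2 * t * a ^ (t - r) ≤ M * (dR - t) ^ (t - r))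
    (hMB : 2 * t * a ^ t ≤ M * (dB - t) ^ t) :
    onlineRamsey 2 (completeBipartiteGraph (Fin t) (Fin t)) ≤
      2 * r * (4 ^ r * M) + a * M := by
  classical
  set U := Finset.Ico 0 (2 * r) with hUdef
  set A := Finset.Ico (2 * r) (2 * r + a) with hAdef
  set V := Finset.Ico (2 * r + a) (2 * r + a + 4 ^ r * M) with hVdef
  have hU : U.card = 2 * r := by simp [hUdef]
  have hA : A.card = a := by simp [hAdef]
  have hV : V.card = 4 ^ r * M := by simp [hVdef]
  have hUA : Disjoint U A := Finset.disjoint_left.2 fun x hx hy => by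
    rw [Finset.mem_Ico] at hx hy; omega
  have hUV : Disjoint U V := Finset.disjoint_left.2 fun x hx hy => by
    rw [Finset.mem_Ico] at hx hy; omega
  have hAV : Disjoint A V := Finset.disjoint_left.2 fun x hx hy => by
    rw [Finset.mem_Ico] at hx hy; omega
  have hnd : ∀ {X Y : Finset ℕ} {u v : ℕ}, Disjoint X Y → u ∈ X → v ∈ Y → ¬ (s(u, v)).IsDiag := by
    intro X Y u v hXY hu hv hdiag
    rw [Sym2.mk_isDiag_iff] at hdiag
    exact Finset.disjoint_left.1 hXY hu (hdiag ▸ hv)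
  have hex : ∀ h : History 2, ∃ W : Finset ℕ, W.card ≤ M ∧
      ((∀ u ∈ U, ∀ v ∈ V, ∃ i, (s(u, v), i) ∈ h) → W ⊆ V ∧ W.card = M ∧
        ∃ R ⊆ U, R.card = r ∧ ∃ c : Fin 2, ∀ u ∈ R, ∀ v ∈ W, (s(u, v), c) ∈ h) := by
    intro h
    by_cases H : ∀ u ∈ U, ∀ v ∈ V, ∃ i, (s(u, v), i) ∈ h
    · obtain ⟨W, hW, hWM, hrest⟩ := phase_one h r M U V hU hV H
      exact ⟨W, hWM.le, fun _ => ⟨hW, hWM, hrest⟩⟩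
    · exact ⟨∅, by simp, fun H' => absurd H' H⟩
  choose W hWM hW using hex
  obtain ⟨B, hB, hplay⟩ := two_phase (crossEdges U V) (fun h => crossEdges A (W h))
    (2 * r * (4 ^ r * M)) (a * M)
    ((crossEdges_card _ _).trans (by rw [hU, hV]))
    (fun h => (crossEdges_card _ _).trans (by
      rw [hA]; exact Nat.mul_le_mul_left _ (hWM h)))
  apply Nat.sInf_le
  refine ⟨B, hB, fun P => ⟨_, le_rfl, ?_⟩⟩
  obtain ⟨hp1, hp2⟩ := hplay P
  set h1 := play B P (2 * r * (4 ^ r * M)) with hh1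
  obtain ⟨hWV, hWc, R, hRU, hRr, c, hc⟩ := hW h1
    (fun u hu v hv => hp1 _ (mem_crossEdges hu hv) (hnd hUV hu hv))
  have hpre : ∀ x ∈ h1, x ∈ play B P (2 * r * (4 ^ r * M) + a * M) :=
    fun x hx => (play_extends B P _ _).subset hx
  exact phase_two _ t r M dR dB A (W h1) R c ht hrt (by rw [hA]; exact hta)
    (by rw [hA]; exact hd) hWc hRr (hUA.mono_left hRU) (hUV.mono hRU hWV)
    (hAV.mono_right hWV) (fun u hu v hv => hpre _ (hc u hu v hv))
    (fun u hu v hv => hp2 _ (mem_crossEdges hu hv) (hnd (hAV.mono_right hWV) hu hv))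
    (by rw [hA]; exact hMR) (by rw [hA]; exact hMB)

lemma exp_le_one_add (y : ℝ) (hy : -(1 / 2) ≤ y) : Real.exp (y - 2 * y ^ 2) ≤ 1 + y := by
  have hpos : 0 < 1 + y := by linarith
  rw [← Real.le_log_iff_exp_le hpos]
  have h1 := Real.one_sub_inv_le_log_of_pos hpos
  refine le_trans ?_ h1
  have h2 : 1 - (1 + y)⁻¹ = y / (1 + y) := by field_simp; ring
  rw [h2, le_div_iff₀ hpos]
  nlinarith [sq_nonneg y, mul_nonneg (sq_nonneg y) (show (0:ℝ) ≤ 1 + 2 * y by linarith)]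

lemma log_sq_le (l : ℕ) (hl : 2 ≤ l) : (l + 2) ^ 2 ≤ 4 * 2 ^ l := by
  induction l, hl using Nat.le_induction with
  | base => norm_num
  | succ n hn ih => rw [pow_succ 2 n]; nlinarith

/-- Lower bounds for the powers that occur in phase two. -/
lemma pow_lower (t r k : ℕ) (ht : 4 ≤ t) (hk : k ≤ t) (hr : (r + 2) ^ 2 ≤ 4 * t) (y σ : ℝ)
    (hy : |y| ≤ ((r : ℝ) / 2 + 1) / t) (hσ : σ - 1 ≤ t * y) (hcase : k = t ∨ y ≤ 0) :
    Real.exp (σ - 3) ≤ (1 + y) ^ k := by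
  have htR : (4 : ℝ) ≤ t := by exact_mod_cast ht
  have htpos : (0 : ℝ) < t := by linarith
  have hrR : ((r : ℝ) + 2) ^ 2 ≤ 4 * t := by exact_mod_cast hr
  have hy1 : t * |y| ≤ (r : ℝ) / 2 + 1 := by
    rw [le_div_iff₀ htpos] at hy; linarith
  have hty2 : t * y ^ 2 ≤ 1 := by
    have h1 : (t * |y|) ^ 2 ≤ ((r : ℝ) / 2 + 1) ^ 2 :=
      pow_le_pow_left₀ (by positivity) hy1 2
    have h2 : t * (t * y ^ 2) ≤ t * 1 := by
      rw [mul_pow, sq_abs] at h1; nlinarith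
    exact le_of_mul_le_mul_left h2 htpos
  have hyhalf : -(1 / 2) ≤ y := by
    have : y ^ 2 ≤ (1 / 2) ^ 2 := by nlinarith [sq_nonneg y]
    exact (abs_le_of_sq_le_sq' this (by norm_num)).1
  have hbase := exp_le_one_add y hyhalf
  have hkey : σ - 3 ≤ k * (y - 2 * y ^ 2) := by
    rcases hcase with rfl | hneg
    · nlinarith
    · have hkR : (k : ℝ) ≤ t := by exact_mod_cast hk
      have : (0:ℝ) ≤ -(y - 2 * y ^ 2) := by nlinarith [sq_nonneg y]
      nlinarith [mul_le_mul_of_nonneg_right hkR this]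
  calc Real.exp (σ - 3) ≤ Real.exp (k * (y - 2 * y ^ 2)) := Real.exp_le_exp.2 hkey
    _ = Real.exp (y - 2 * y ^ 2) ^ k := Real.exp_nat_mul _ _
    _ ≤ _ := pow_le_pow_left₀ (Real.exp_pos _).le hbase k

lemma numeric (t r : ℕ) (ht : 4 ≤ t) (hrt : r ≤ t) (hr : (r + 2) ^ 2 ≤ 4 * t) (s : ℝ)
    (hs : s = Real.exp (r * Real.log 2 / 2))
    (hb : 2 * r * 4 ^ r ≤ 2 * t ^ 2) :
    (onlineRamsey 2 (completeBipartiteGraph (Fin t) (Fin t)) : ℝ) ≤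
      24 * Real.exp 3 * t ^ 3 * 2 ^ t / s := by
  have htR : (4 : ℝ) ≤ t := by exact_mod_cast ht
  have htpos : (0 : ℝ) < t := by linarith
  have hrR : (r : ℝ) ≤ t := by exact_mod_cast hrt
  have hL0 : 0 < Real.log 2 := Real.log_pos (by norm_num)
  have hL1 : Real.log 2 ≤ 1 := by have := Real.log_two_lt_d9; linarith
  have hspos : 0 < s := hs ▸ Real.exp_pos _
  have hs2 : s ^ 2 = 2 ^ r := by
    rw [hs, ← Real.exp_nat_mul]
    have : ((2 : ℕ) : ℝ) * (r * Real.log 2 / 2) = r * Real.log 2 := by push_cast; ring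
    rw [this, Real.exp_nat_mul, Real.exp_log (by norm_num)]
  have hs1 : 1 ≤ s := by
    rw [hs]; apply Real.one_le_exp; positivity
  have hrL : (r : ℝ) * Real.log 2 ≤ r := by nlinarith [Nat.cast_nonneg (α := ℝ) r]
  set h : ℕ := ⌊(t : ℝ) * r * Real.log 2⌋₊ with hh
  have hh1 : (h : ℝ) ≤ t * r * Real.log 2 := Nat.floor_le (by positivity)
  have hh2 : t * r * Real.log 2 < h + 1 := Nat.lt_floor_add_one _
  have hhle : (h : ℝ) ≤ t ^ 2 := by nlinarith
  have hhle' : h ≤ t ^ 2 := by exact_mod_cast hhle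
  set M : ℕ := ⌈2 * Real.exp 3 * t * 2 ^ t / s⌉₊ with hM
  have hMge : 2 * Real.exp 3 * t * 2 ^ t / s ≤ M := Nat.le_ceil _
  have hMle : (M : ℝ) ≤ 4 * Real.exp 3 * t * 2 ^ t / s := by
    have h1 : (M : ℝ) < 2 * Real.exp 3 * t * 2 ^ t / s + 1 := Nat.ceil_lt_add_one (by positivity)
    have h2 : 1 ≤ 2 * Real.exp 3 * t * 2 ^ t / s := by
      rw [le_div_iff₀ hspos, one_mul]
      have hst : s ≤ 2 ^ t := by
        calc s ≤ s ^ 2 := by nlinarith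
          _ = 2 ^ r := hs2
          _ ≤ 2 ^ t := pow_le_pow_right₀ (by norm_num) hrt
      have he : (1:ℝ) ≤ Real.exp 3 := Real.one_le_exp (by norm_num)
      have : (1:ℝ) ≤ 2 * Real.exp 3 * t := by nlinarith
      calc s ≤ 2 ^ t := hst
        _ ≤ _ := le_mul_of_one_le_left (by positivity) this
    have h3 : 4 * Real.exp 3 * t * 2 ^ t / s = 2 * (2 * Real.exp 3 * t * 2 ^ t / s) := by ring
    linarith
  have htt : t ≤ t ^ 2 := by nlinarith
  -- the two degree thresholds
  have hyR := pow_lower t r (t - r) ht (by omega) hr (-(r * Real.log 2 / 2) / t - 1 / t)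
    (-(r * Real.log 2 / 2))
    (by
      rw [abs_of_nonpos]
      · have : -(-(r * Real.log 2 / 2) / (t:ℝ) - 1 / t) = (r * Real.log 2 / 2 + 1) / t := by
          field_simp; ring
        rw [this]; gcongr
      · have : 0 ≤ (r * Real.log 2 / 2) / (t:ℝ) := by positivity
        have h1 : 0 ≤ 1 / (t:ℝ) := by positivity
        rw [neg_div]; linarith)
    (by
      apply le_of_eq; field_simp)
    (Or.inr (by
      have : 0 ≤ (r * Real.log 2 / 2) / (t:ℝ) := by positivity
      have h1 : 0 ≤ 1 / (t:ℝ) := by positivity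
      rw [neg_div]; linarith))
  have hyB := pow_lower t r t ht le_rfl hr ((r * Real.log 2 / 2) / t - 1 / t)
    (r * Real.log 2 / 2)
    (by
      have h0 : 0 ≤ (r * Real.log 2 / 2) / (t:ℝ) := by positivity
      have h1 : 0 ≤ 1 / (t:ℝ) := by positivity
      have h2 : (r * Real.log 2 / 2) / (t:ℝ) ≤ (r / 2) / t := by gcongr
      have h3 : ((r : ℝ) / 2 + 1) / t = (r / 2) / t + 1 / t := by ring
      rw [abs_le, h3]
      constructor <;> linarith)
    (by
      apply le_of_eq; field_simp)
    (Or.inl rfl)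
  have hcastR : (2 * (t:ℝ) ^ 2) * (1 + (-(r * Real.log 2 / 2) / t - 1 / t)) ≤
      ((2 * t ^ 2 - h - t : ℕ) : ℝ) := by
    rw [Nat.cast_sub (by omega), Nat.cast_sub (by omega)]
    push_cast
    have : (2 * (t:ℝ) ^ 2) * (1 + (-(r * Real.log 2 / 2) / t - 1 / t)) =
      2 * t ^ 2 - t * r * Real.log 2 - 2 * t := by field_simp; ring
    rw [this]; linarith
  have hcastB : (2 * (t:ℝ) ^ 2) * (1 + ((r * Real.log 2 / 2) / t - 1 / t)) ≤
      ((2 * t ^ 2 + h - t : ℕ) : ℝ) := by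
    rw [Nat.cast_sub (by omega)]
    push_cast
    have : (2 * (t:ℝ) ^ 2) * (1 + ((r * Real.log 2 / 2) / t - 1 / t)) =
      2 * t ^ 2 + t * r * Real.log 2 - 2 * t := by field_simp; ring
    rw [this]; linarith
  have hle1 : (r * Real.log 2 / 2) / (t:ℝ) ≤ 1 / 2 := by
    rw [div_le_iff₀ htpos]; linarith
  have hle2 : 1 / (t:ℝ) ≤ 1 / 4 := by
    gcongr
  have hge1 : 0 ≤ (r * Real.log 2 / 2) / (t:ℝ) := by positivity
  have hmain := online_le t r M (4 * t ^ 2) (2 * t ^ 2 - h) (2 * t ^ 2 + h) (by omega) hrt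
    (by omega) (by omega)
    (by
      have hreal : 2 * (t:ℝ) * (4 * t ^ 2) ^ (t - r) ≤
          M * ((2 * t ^ 2 - h - t : ℕ) : ℝ) ^ (t - r) := by
        have e1 : (2 * (t:ℝ) ^ 2) ^ (t - r) * (Real.exp (-3) / s) ≤
            ((2 * t ^ 2 - h - t : ℕ) : ℝ) ^ (t - r) := by
          have e2 : Real.exp (-3) / s = Real.exp (-(r * Real.log 2 / 2) - 3) := by
            rw [hs, ← Real.exp_sub]; ring_nf
          rw [e2]
          calc _ ≤ (2 * (t:ℝ) ^ 2) ^ (t - r) *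
                (1 + (-(r * Real.log 2 / 2) / t - 1 / t)) ^ (t - r) := by gcongr
            _ = ((2 * (t:ℝ) ^ 2) * (1 + (-(r * Real.log 2 / 2) / t - 1 / t))) ^ (t - r) := by
              exact (mul_pow _ _ _).symm
            _ ≤ _ := by
              refine pow_le_pow_left₀ ?_ hcastR _
              apply mul_nonneg (by positivity)
              rw [neg_div]; linarith
        have e3 : (2:ℝ) ^ t = 2 ^ (t - r) * s ^ 2 := by
          rw [hs2, ← pow_add]; congr 1; omega
        calc 2 * (t:ℝ) * (4 * t ^ 2) ^ (t - r)
            = (2 * Real.exp 3 * t * 2 ^ t / s) * ((2 * (t:ℝ) ^ 2) ^ (t - r) * (Real.exp (-3) / s)) := by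
              rw [e3, Real.exp_neg, show (4 * (t:ℝ) ^ 2) = 2 * (2 * t ^ 2) by ring, mul_pow 2 (2 * (t:ℝ) ^ 2)]
              have := Real.exp_pos 3
              field_simp
          _ ≤ _ := by gcongr
      exact_mod_cast hreal)
    (by
      have hreal : 2 * (t:ℝ) * (4 * t ^ 2) ^ t ≤
          M * ((2 * t ^ 2 + h - t : ℕ) : ℝ) ^ t := by
        have e1 : (2 * (t:ℝ) ^ 2) ^ t * (Real.exp (-3) * s) ≤
            ((2 * t ^ 2 + h - t : ℕ) : ℝ) ^ t := by
          have e2 : Real.exp (-3) * s = Real.exp ((r * Real.log 2 / 2) - 3) := by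
            rw [hs, ← Real.exp_add]; ring_nf
          rw [e2]
          calc _ ≤ (2 * (t:ℝ) ^ 2) ^ t *
                (1 + ((r * Real.log 2 / 2) / t - 1 / t)) ^ t := by gcongr
            _ = ((2 * (t:ℝ) ^ 2) * (1 + ((r * Real.log 2 / 2) / t - 1 / t))) ^ t := by
              exact (mul_pow _ _ _).symm
            _ ≤ _ := by
              refine pow_le_pow_left₀ ?_ hcastB _
              apply mul_nonneg (by positivity)
              linarith
        calc 2 * (t:ℝ) * (4 * t ^ 2) ^ t
            = (2 * Real.exp 3 * t * 2 ^ t / s) * ((2 * (t:ℝ) ^ 2) ^ t * (Real.exp (-3) * s)) := by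
              rw [Real.exp_neg, show (4 * (t:ℝ) ^ 2) = 2 * (2 * t ^ 2) by ring, mul_pow 2 (2 * (t:ℝ) ^ 2)]
              have := Real.exp_pos 3
              field_simp
          _ ≤ _ := by gcongr
      exact_mod_cast hreal)
  have hfin : 2 * r * (4 ^ r * M) + 4 * t ^ 2 * M ≤ 6 * t ^ 2 * M := by
    have := Nat.mul_le_mul_right M hb
    nlinarith
  calc (onlineRamsey 2 (completeBipartiteGraph (Fin t) (Fin t)) : ℝ)
      ≤ ((6 * t ^ 2 * M : ℕ) : ℝ) := by exact_mod_cast hmain.trans hfin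
    _ = 6 * t ^ 2 * M := by push_cast; ring
    _ ≤ 6 * t ^ 2 * (4 * Real.exp 3 * t * 2 ^ t / s) := by gcongr
    _ = _ := by ring

lemma large_t (t : ℕ) (ht : 4 ≤ t) :
    (onlineRamsey 2 (completeBipartiteGraph (Fin t) (Fin t)) : ℝ) ≤
      (48 * Real.exp 3) * 2 ^ t * (t : ℝ) ^ ((5 : ℝ) / 2) * (Real.logb 2 t) ^ ((1 : ℝ) / 2) := by
  set l := Nat.log 2 t with hl
  have hl2 : 2 ≤ l := Nat.le_log_of_pow_le (by norm_num) (by omega)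
  have hlt : 2 ^ l ≤ t := Nat.pow_log_le_self 2 (by omega)
  have hllt : l < 2 ^ l := Nat.lt_two_pow_self
  set r := Nat.log 2 (t / l) with hr
  have htl : t / l ≠ 0 := (Nat.div_pos (by omega) (by omega)).ne'
  have hr1 : 2 ^ r * l ≤ t := by
    have := Nat.pow_log_le_self 2 htl
    exact (Nat.le_div_iff_mul_le (by omega)).1 this
  have hr2 : t < 2 ^ (r + 1) * l := by
    have := Nat.lt_pow_succ_log_self (b := 2) (by norm_num) (t / l)
    exact (Nat.div_lt_iff_lt_mul (by omega)).1 this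
  have hrl : r ≤ l := Nat.log_mono_right (Nat.div_le_self _ _)
  have hsq : (r + 2) ^ 2 ≤ 4 * t := by
    have := log_sq_le l hl2
    have h2 : (r + 2) ^ 2 ≤ (l + 2) ^ 2 := Nat.pow_le_pow_left (by omega) 2
    omega
  have hb : 2 * r * 4 ^ r ≤ 2 * t ^ 2 := by
    have h1 : (2 ^ r * l) ^ 2 ≤ t ^ 2 := Nat.pow_le_pow_left hr1 2
    have h2 : (2 ^ r * l) ^ 2 = 4 ^ r * (l * l) := by
      rw [mul_pow, ← pow_mul, mul_comm r 2, pow_mul]; norm_num [sq]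
    have h3 : r ≤ l * l := by nlinarith
    have h4 := Nat.mul_le_mul_left (4 ^ r) h3
    nlinarith
  have hnum := numeric t r ht (by omega) hsq _ rfl hb
  set s := Real.exp (r * Real.log 2 / 2) with hs
  have hspos : 0 < s := Real.exp_pos _
  have hs2 : s ^ 2 = 2 ^ r := by
    rw [hs, ← Real.exp_nat_mul]
    have : ((2 : ℕ) : ℝ) * (r * Real.log 2 / 2) = r * Real.log 2 := by push_cast; ring
    rw [this, Real.exp_nat_mul, Real.exp_log (by norm_num)]
  have htR : (4 : ℝ) ≤ t := by exact_mod_cast ht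
  have htpos : (0 : ℝ) < t := by linarith
  have hlog : (l : ℝ) ≤ Real.logb 2 t := by
    rw [Real.le_logb_iff_rpow_le (by norm_num) htpos, Real.rpow_natCast]
    exact_mod_cast hlt
  have hlogpos : 0 ≤ Real.logb 2 t := le_trans (Nat.cast_nonneg l) hlog
  have hr2R : (t : ℝ) ≤ 2 * s ^ 2 * Real.logb 2 t := by
    have : (t : ℝ) < 2 ^ (r + 1) * l := by exact_mod_cast hr2
    rw [pow_succ, ← hs2] at this
    nlinarith [mul_le_mul_of_nonneg_left hlog (sq_nonneg s)]
  have hsqrt : Real.sqrt t ≤ 2 * s * Real.sqrt (Real.logb 2 t) := by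
    apply Real.sqrt_le_iff.2
    refine ⟨by positivity, ?_⟩
    rw [mul_pow, mul_pow, Real.sq_sqrt hlogpos]
    nlinarith [mul_nonneg (sq_nonneg s) hlogpos]
  have hp : (t : ℝ) ^ ((5 : ℝ) / 2) = t ^ 2 * Real.sqrt t := by
    rw [Real.sqrt_eq_rpow, show (5:ℝ) / 2 = 2 + 1 / 2 by norm_num, Real.rpow_add htpos]
    norm_num
  rw [hp, ← Real.sqrt_eq_rpow]
  refine hnum.trans ?_
  rw [div_le_iff₀ hspos]
  have hstt : Real.sqrt t * Real.sqrt t = t := Real.mul_self_sqrt htpos.le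
  calc 24 * Real.exp 3 * (t:ℝ) ^ 3 * 2 ^ t
      = (24 * Real.exp 3 * t ^ 2 * 2 ^ t * Real.sqrt t) * Real.sqrt t := by
        calc _ = 24 * Real.exp 3 * (t:ℝ) ^ 2 * 2 ^ t * t := by ring
          _ = 24 * Real.exp 3 * (t:ℝ) ^ 2 * 2 ^ t * (Real.sqrt t * Real.sqrt t) := by rw [hstt]
          _ = _ := by ring
    _ ≤ (24 * Real.exp 3 * t ^ 2 * 2 ^ t * Real.sqrt t) * (2 * s * Real.sqrt (Real.logb 2 t)) := by
        gcongr
    _ = _ := by ring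

/-- There is `c > 0` with `r̃(K_{t,t}) ≤ c 2^t t^{5/2} (log₂ t)^{1/2}` for all `t ≥ 2`. -/
theorem online_ramsey_bipartite :
    ∃ c : ℝ, 0 < c ∧ ∀ t : ℕ, 2 ≤ t →
      (onlineRamsey 2 (completeBipartiteGraph (Fin t) (Fin t)) : ℝ) ≤
        c * 2 ^ t * (t : ℝ) ^ ((5 : ℝ) / 2) * (Real.logb 2 t) ^ ((1 : ℝ) / 2) := by
  have hpos : ∀ t : ℕ, 2 ≤ t →
      (0:ℝ) < 2 ^ t * (t : ℝ) ^ ((5 : ℝ) / 2) * (Real.logb 2 t) ^ ((1 : ℝ) / 2) := by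
    intro t ht
    have htR : (2 : ℝ) ≤ t := by exact_mod_cast ht
    have h1 : 0 < Real.logb 2 t := Real.logb_pos (by norm_num) (by linarith)
    have h2 : (0:ℝ) < t := by linarith
    positivity
  set F : ℕ → ℝ := fun t => 2 ^ t * (t : ℝ) ^ ((5 : ℝ) / 2) * (Real.logb 2 t) ^ ((1 : ℝ) / 2)
    with hF
  set G : ℕ → ℝ := fun t => (onlineRamsey 2 (completeBipartiteGraph (Fin t) (Fin t)) : ℝ) with hG
  have hGnn : ∀ t, 0 ≤ G t := fun t => Nat.cast_nonneg _
  have h2 : 0 < F 2 := hpos 2 le_rfl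
  have h3 : 0 < F 3 := hpos 3 (by norm_num)
  have hq2 : 0 ≤ G 2 / F 2 := div_nonneg (hGnn 2) h2.le
  have hq3 : 0 ≤ G 3 / F 3 := div_nonneg (hGnn 3) h3.le
  have he : 0 < 48 * Real.exp 3 := by positivity
  refine ⟨48 * Real.exp 3 + G 2 / F 2 + G 3 / F 3, by linarith, ?_⟩
  intro t ht
  have hFt : 0 < F t := hpos t ht
  have hgoal : ∀ c : ℝ, c * 2 ^ t * (t : ℝ) ^ ((5 : ℝ) / 2) * (Real.logb 2 t) ^ ((1 : ℝ) / 2)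
      = c * F t := fun c => by simp only [hF]; ring
  rw [hgoal]
  change G t ≤ _
  by_cases h4 : 4 ≤ t
  · have := large_t t h4
    rw [hgoal] at this
    exact this.trans (mul_le_mul_of_nonneg_right (by linarith) hFt.le)
  · rw [← div_le_iff₀ hFt]
    have : t = 2 ∨ t = 3 := by omega
    rcases this with rfl | rfl <;> linarith
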